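/- (Primal Γ4 identity from the proof of Lemma 2.) Let b : [0,1] → ℝ be continuously differentiable, P1, P2 : [0,1]² → ℝ continuously differentiable with P1(x,ξ) = P2(ξ,x) for all x, ξ, and w : [0,1] → ℝ continuously differentiable. Then ∫₀¹ w'(x)·b(x)·[∫₀^x P1(x,ξ)w(ξ)dξ + ∫_x^1 P2(x,ξ)w(ξ)dξ] dx = −(1/2)∫₀¹∫₀^x w(x)·[∂/∂x(b(x)P1(x,ξ)) + ∂/∂ξ(b(ξ)P1(x,ξ))]·w(ξ) dξ dx − (1/2)∫₀¹∫_x^1 w(x)·[∂/∂x(b(x)P2(x,ξ)) + ∂/∂ξ(b(ξ)P2(x,ξ))]·w(ξ) dξ dx + w(1)·∫₀¹ b(1)·P1(1,ξ)·w(ξ) dξ − w(0)·∫₀¹ b(0)·P2(0,ξ)·w(ξ) dξ. -/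

import Mathlib

open MeasureTheory

/-!
For a kernel equal to `L` below the diagonal and to `U` above it, integrating `∂/∂x` over each
triangle (`x` first, by Fubini) leaves only values on the two vertical sides of the square and on
the diagonal; the diagonal values cancel when `L` and `U` agree there. Applied to
`w x * (b x * Pᵢ x ξ) * w ξ`, the product rule turns this into integration by parts for the
left-hand side. Finally `b ξ * P1 x ξ = b ξ * P2 ξ x`, so the `∂/∂ξ` terms are the reflections of
the `∂/∂x` terms across the diagonal and have the same integral, which accounts for the factor
`1 / 2`.
-/

lemma integrableOn_uIoc_prod_uIoc_of_continuous {E : Type*} [NormedAddCommGroup E]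
    {f : ℝ × ℝ → E} (hf : Continuous f) (a b c d : ℝ) :
    IntegrableOn f (Set.uIoc a b ×ˢ Set.uIoc c d) :=
  (hf.continuousOn.integrableOn_compact (isCompact_uIcc.prod isCompact_uIcc)).mono_set
    (Set.prod_mono Set.uIoc_subset_uIcc Set.uIoc_subset_uIcc)

section NormedSpace

variable {E : Type*} [NormedAddCommGroup E] [NormedSpace ℝ E]

lemma intervalIntegral_indicator_Iio {a b c : ℝ} (hc : c ∈ Set.Icc a b) (f : ℝ → E) :
    ∫ x in a..b, (Set.Iio c).indicator f x = ∫ x in a..c, f x := by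
  rw [← intervalIntegral.integral_indicator hc]
  refine intervalIntegral.integral_congr_ae' ?_ ?_ <;>
    filter_upwards [indicator_ae_eq_of_ae_eq_set (f := f) (Iio_ae_eq_Iic (a := c))] with x hx _
      using hx

lemma intervalIntegral_indicator_Ioi {a b c : ℝ} (hc : c ∈ Set.Icc a b) (f : ℝ → E) :
    ∫ x in a..b, (Set.Ioi c).indicator f x = ∫ x in c..b, f x := by
  rw [intervalIntegral.integral_of_le (hc.1.trans hc.2), intervalIntegral.integral_of_le hc.2,
    setIntegral_indicator measurableSet_Ioi, Set.Ioc_inter_Ioi, sup_eq_right.mpr hc.1]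

lemma intervalIntegral_triangle_swap_of_le {f : ℝ → ℝ → E} {a b : ℝ} (hab : a ≤ b)
    (hf : IntegrableOn (Function.uncurry f) (Set.uIoc a b ×ˢ Set.uIoc a b)) :
    ∫ x in a..b, ∫ y in a..x, f x y = ∫ y in a..b, ∫ x in y..b, f x y := by
  have measurableSet_lower : MeasurableSet {p : ℝ × ℝ | p.2 < p.1} :=
    measurableSet_lt measurable_snd measurable_fst
  calc ∫ x in a..b, ∫ y in a..x, f x y
      = ∫ x in a..b, ∫ y in a..b, (Set.Iio x).indicator (f x) y := by
        refine intervalIntegral.integral_congr fun x hx => ?_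
        rw [Set.uIcc_of_le hab] at hx
        exact (intervalIntegral_indicator_Iio hx (f x)).symm
    _ = ∫ y in a..b, ∫ x in a..b, (Set.Ioi y).indicator (f · y) x :=
        intervalIntegral_intervalIntegral_swap (hf.indicator measurableSet_lower)
    _ = ∫ y in a..b, ∫ x in y..b, f x y := by
        refine intervalIntegral.integral_congr fun y hy => ?_
        rw [Set.uIcc_of_le hab] at hy
        exact intervalIntegral_indicator_Ioi hy (f · y)

theorem intervalIntegral_triangle_swap {f : ℝ → ℝ → E} {a b : ℝ}
    (hf : IntegrableOn (Function.uncurry f) (Set.uIoc a b ×ˢ Set.uIoc a b)) :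
    ∫ x in a..b, ∫ y in a..x, f x y = ∫ y in a..b, ∫ x in y..b, f x y := by
  rcases le_total a b with hab | hba
  · exact intervalIntegral_triangle_swap_of_le hab hf
  · have hf_swap : IntegrableOn (Function.uncurry fun x y => f y x)
        (Set.uIoc b a ×ˢ Set.uIoc b a) := by
      rw [Set.uIoc_comm]
      exact hf.swap
    simp only [intervalIntegral.integral_symm b a, intervalIntegral.integral_symm _ a,
      intervalIntegral.integral_symm b, intervalIntegral.integral_neg, neg_neg]
    exact (intervalIntegral_triangle_swap_of_le hba hf_swap).symm

lemma continuous_intervalIntegral_left {f : ℝ → ℝ → E} (hf : Continuous (Function.uncurry f))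
    (b : ℝ) : Continuous fun x => ∫ y in x..b, f x y := by
  simp only [intervalIntegral.integral_symm b]
  fun_prop

lemma continuous_partialDeriv_left {f : ℝ → ℝ → E} (hf : ContDiff ℝ 1 (Function.uncurry f)) :
    Continuous (Function.uncurry fun x y => deriv (fun t => f t y) x) := by
  have hf_swap : ContDiff ℝ 1 (Function.uncurry fun (p : ℝ × ℝ) t => f t p.2) :=
    hf.comp (contDiff_snd.prodMk contDiff_fst.snd)
  exact (Continuous.fderiv_one hf_swap continuous_fst).clm_apply (continuous_const (y := (1 : ℝ)))

lemma hasDerivAt_partialDeriv_left {f : ℝ → ℝ → E} (hf : ContDiff ℝ 1 (Function.uncurry f))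
    (x y : ℝ) : HasDerivAt (fun t => f t y) (deriv (fun t => f t y) x) x :=
  have hf_left : ContDiff ℝ 1 fun t => f t y := hf.comp (contDiff_id.prodMk contDiff_const)
  (hf_left.differentiable one_ne_zero x).hasDerivAt

/-- The integral over the square `[a, b]²` of the function equal to `L x ξ` below the diagonal
(`ξ < x`) and to `U x ξ` above it (`x < ξ`), encoded as iterated integrals with `ξ` innermost. -/
noncomputable def splitIntegral (a b : ℝ) (L U : ℝ → ℝ → E) : E :=
  (∫ x in a..b, ∫ ξ in a..x, L x ξ) + ∫ x in a..b, ∫ ξ in x..b, U x ξ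

variable {L U L' U' : ℝ → ℝ → E} {a b : ℝ}

lemma splitIntegral_eq_integral_add (hL : Continuous (Function.uncurry L))
    (hU : Continuous (Function.uncurry U)) :
    splitIntegral a b L U = ∫ x in a..b, ((∫ ξ in a..x, L x ξ) + ∫ ξ in x..b, U x ξ) := by
  refine (intervalIntegral.integral_add ?_ ?_).symm
  · exact Continuous.intervalIntegrable (by fun_prop) a b
  · exact (continuous_intervalIntegral_left hU b).intervalIntegrable a b

lemma splitIntegral_add (hL : Continuous (Function.uncurry L))
    (hU : Continuous (Function.uncurry U)) (hL' : Continuous (Function.uncurry L'))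
    (hU' : Continuous (Function.uncurry U')) :
    splitIntegral a b (fun x ξ => L x ξ + L' x ξ) (fun x ξ => U x ξ + U' x ξ) =
      splitIntegral a b L U + splitIntegral a b L' U' := by
  have inner_add {f g : ℝ → ℝ → E} (hf : Continuous (Function.uncurry f))
      (hg : Continuous (Function.uncurry g)) (x c d : ℝ) :
      ∫ ξ in c..d, (f x ξ + g x ξ) = (∫ ξ in c..d, f x ξ) + ∫ ξ in c..d, g x ξ :=
    intervalIntegral.integral_add ((hf.uncurry_left x).intervalIntegrable c d)
      ((hg.uncurry_left x).intervalIntegrable c d)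
  simp only [splitIntegral, inner_add hL hL', inner_add hU hU']
  rw [intervalIntegral.integral_add
      (Continuous.intervalIntegrable (by fun_prop) a b)
      (Continuous.intervalIntegrable (by fun_prop) a b),
    intervalIntegral.integral_add
      ((continuous_intervalIntegral_left hU b).intervalIntegrable a b)
      ((continuous_intervalIntegral_left hU' b).intervalIntegrable a b)]
  exact add_add_add_comm _ _ _ _

lemma splitIntegral_transpose (hL : Continuous (Function.uncurry L))
    (hU : Continuous (Function.uncurry U)) :
    splitIntegral a b (fun x ξ => U ξ x) (fun x ξ => L ξ x) = splitIntegral a b L U := by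
  have lower_swap := intervalIntegral_triangle_swap
    (integrableOn_uIoc_prod_uIoc_of_continuous hL a b a b)
  have upper_swap := intervalIntegral_triangle_swap (f := fun x ξ => U ξ x)
    (integrableOn_uIoc_prod_uIoc_of_continuous (hU.comp continuous_swap) a b a b)
  rw [splitIntegral, splitIntegral, lower_swap, upper_swap, add_comm]

lemma splitIntegral_add_transpose (hL : Continuous (Function.uncurry L))
    (hU : Continuous (Function.uncurry U)) :
    splitIntegral a b (fun x ξ => L x ξ + U ξ x) (fun x ξ => U x ξ + L ξ x) =
      (2 : ℝ) • splitIntegral a b L U := by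
  rw [splitIntegral_add hL hU (by fun_prop) (by fun_prop),
    splitIntegral_transpose hL hU, two_smul]

theorem splitIntegral_eq_of_hasDerivAt [CompleteSpace E] (hL' : Continuous (Function.uncurry L'))
    (hU' : Continuous (Function.uncurry U'))
    (hL : ∀ x ξ, HasDerivAt (fun t => L t ξ) (L' x ξ) x)
    (hU : ∀ x ξ, HasDerivAt (fun t => U t ξ) (U' x ξ) x)
    (hdiag : ∀ ξ, L ξ ξ = U ξ ξ) :
    splitIntegral a b L' U' = ∫ ξ in a..b, (L b ξ - U a ξ) := by
  rw [← splitIntegral_transpose hL' hU', splitIntegral_eq_integral_add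
    (by fun_prop) (by fun_prop)]
  refine intervalIntegral.integral_congr fun ξ _ => ?_
  have integral_upper : ∫ x in a..ξ, U' x ξ = U ξ ξ - U a ξ :=
    intervalIntegral.integral_eq_sub_of_hasDerivAt (fun x _ => hU x ξ)
      ((hU'.uncurry_right ξ).intervalIntegrable a ξ)
  have integral_lower : ∫ x in ξ..b, L' x ξ = L b ξ - L ξ ξ :=
    intervalIntegral.integral_eq_sub_of_hasDerivAt (fun x _ => hL x ξ)
      ((hL'.uncurry_right ξ).intervalIntegrable ξ b)
  simp only [integral_upper, integral_lower, hdiag]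
  abel

end NormedSpace

section KernelIntegrationByParts

variable {K₁ K₂ : ℝ → ℝ → ℝ} {u v : ℝ → ℝ} {a b : ℝ}

lemma integral_mul_kernel_eq_splitIntegral (hu : Continuous u) (hv : Continuous v)
    (hK₁ : Continuous (Function.uncurry K₁)) (hK₂ : Continuous (Function.uncurry K₂)) :
    ∫ x in a..b, u x * ((∫ ξ in a..x, K₁ x ξ * v ξ) + ∫ ξ in x..b, K₂ x ξ * v ξ) =
      splitIntegral a b (fun x ξ => u x * K₁ x ξ * v ξ) (fun x ξ => u x * K₂ x ξ * v ξ) := by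
  rw [splitIntegral_eq_integral_add (by fun_prop) (by fun_prop)]
  simp only [mul_add, mul_assoc, intervalIntegral.integral_const_mul]

theorem integral_deriv_mul_kernel (hu : ContDiff ℝ 1 u) (hv : Continuous v)
    (hK₁ : ContDiff ℝ 1 (Function.uncurry K₁)) (hK₂ : ContDiff ℝ 1 (Function.uncurry K₂))
    (hdiag : ∀ x, K₁ x x = K₂ x x) :
    ∫ x in a..b, deriv u x * ((∫ ξ in a..x, K₁ x ξ * v ξ) + ∫ ξ in x..b, K₂ x ξ * v ξ) =
      u b * (∫ ξ in a..b, K₁ b ξ * v ξ) - u a * (∫ ξ in a..b, K₂ a ξ * v ξ) -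
        splitIntegral a b (fun x ξ => u x * deriv (fun t => K₁ t ξ) x * v ξ)
          (fun x ξ => u x * deriv (fun t => K₂ t ξ) x * v ξ) := by
  have hu₀ := hu.continuous
  have hu' : Continuous (deriv u) := hu.continuous_deriv le_rfl
  have hK₁₀ := hK₁.continuous
  have hK₂₀ := hK₂.continuous
  have hK₁' := continuous_partialDeriv_left hK₁
  have hK₂' := continuous_partialDeriv_left hK₂
  have hasDerivAt_mul_kernel {K : ℝ → ℝ → ℝ} (hK : ContDiff ℝ 1 (Function.uncurry K)) (x ξ : ℝ) :
      HasDerivAt (fun t => u t * K t ξ * v ξ)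
        (deriv u x * K x ξ * v ξ + u x * deriv (fun t => K t ξ) x * v ξ) x := by
    rw [← add_mul]
    exact ((hu.differentiable one_ne_zero x).hasDerivAt.mul
      (hasDerivAt_partialDeriv_left hK x ξ)).mul_const _
  have intervalIntegrable_side {K : ℝ → ℝ → ℝ} (hK : Continuous (Function.uncurry K)) (c : ℝ) :
      IntervalIntegrable (fun ξ => u c * K c ξ * v ξ) volume a b :=
    ((continuous_const.mul (hK.uncurry_left c)).mul hv).intervalIntegrable a b
  rw [integral_mul_kernel_eq_splitIntegral hu' hv hK₁₀ hK₂₀, eq_sub_iff_add_eq,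
    ← splitIntegral_add (by fun_prop) (by fun_prop) (by fun_prop) (by fun_prop),
    splitIntegral_eq_of_hasDerivAt (by fun_prop) (by fun_prop) (hasDerivAt_mul_kernel hK₁)
      (hasDerivAt_mul_kernel hK₂) (fun ξ => by rw [hdiag]),
    intervalIntegral.integral_sub (intervalIntegrable_side hK₁₀ b) (intervalIntegrable_side hK₂₀ a)]
  simp only [mul_assoc, intervalIntegral.integral_const_mul]

theorem integral_deriv_mul_kernel_symmetrized {w : ℝ → ℝ} (hw : ContDiff ℝ 1 w)
    (hK₁ : ContDiff ℝ 1 (Function.uncurry K₁)) (hK₂ : ContDiff ℝ 1 (Function.uncurry K₂))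
    (hdiag : ∀ x, K₁ x x = K₂ x x) :
    ∫ x in a..b, deriv w x * ((∫ ξ in a..x, K₁ x ξ * w ξ) + ∫ ξ in x..b, K₂ x ξ * w ξ) =
      w b * (∫ ξ in a..b, K₁ b ξ * w ξ) - w a * (∫ ξ in a..b, K₂ a ξ * w ξ) -
        (1 / 2) * splitIntegral a b
          (fun x ξ => w x * (deriv (fun t => K₁ t ξ) x + deriv (fun t => K₂ t x) ξ) * w ξ)
          (fun x ξ => w x * (deriv (fun t => K₂ t ξ) x + deriv (fun t => K₁ t x) ξ) * w ξ) := by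
  have hw₀ := hw.continuous
  have hK₁' := continuous_partialDeriv_left hK₁
  have hK₂' := continuous_partialDeriv_left hK₂
  have symmetrization := splitIntegral_add_transpose (a := a) (b := b)
    (L := fun x ξ => w x * deriv (fun t => K₁ t ξ) x * w ξ)
    (U := fun x ξ => w x * deriv (fun t => K₂ t ξ) x * w ξ) (by fun_prop) (by fun_prop)
  have split_integrand (p q x ξ : ℝ) :
      w x * (p + q) * w ξ = w x * p * w ξ + w ξ * q * w x := by ring
  simp only [split_integrand]
  rw [symmetrization, integral_deriv_mul_kernel hw hw₀ hK₁ hK₂ hdiag, smul_eq_mul]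
  ring

end KernelIntegrationByParts

/-- Primal Γ₄ identity from the proof of Lemma 2. -/
theorem primal_gamma4_identity
    (b : ℝ → ℝ) (hb : ContDiff ℝ 1 b)
    (P1 P2 : ℝ → ℝ → ℝ)
    (hP1 : ContDiff ℝ 1 (fun p : ℝ × ℝ => P1 p.1 p.2))
    (hP2 : ContDiff ℝ 1 (fun p : ℝ × ℝ => P2 p.1 p.2))
    (hsym : ∀ x ξ : ℝ, P1 x ξ = P2 ξ x)
    (w : ℝ → ℝ) (hw : ContDiff ℝ 1 w) :
    (∫ x in (0:ℝ)..1, deriv w x * b x *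
        ((∫ ξ in (0:ℝ)..x, P1 x ξ * w ξ) + ∫ ξ in x..(1:ℝ), P2 x ξ * w ξ))
      = -(1/2) * (∫ x in (0:ℝ)..1, ∫ ξ in (0:ℝ)..x,
            w x * (deriv (fun t => b t * P1 t ξ) x
              + deriv (fun s => b s * P1 x s) ξ) * w ξ)
        - (1/2) * (∫ x in (0:ℝ)..1, ∫ ξ in x..(1:ℝ),
            w x * (deriv (fun t => b t * P2 t ξ) x
              + deriv (fun s => b s * P2 x s) ξ) * w ξ)
        + w 1 * (∫ ξ in (0:ℝ)..1, b 1 * P1 1 ξ * w ξ)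
        - w 0 * (∫ ξ in (0:ℝ)..1, b 0 * P2 0 ξ * w ξ) := by
  have hK₁ : ContDiff ℝ 1 (Function.uncurry fun x ξ => b x * P1 x ξ) := hb.fst'.mul hP1
  have hK₂ : ContDiff ℝ 1 (Function.uncurry fun x ξ => b x * P2 x ξ) := hb.fst'.mul hP2
  have kernel_identity := integral_deriv_mul_kernel_symmetrized (a := 0) (b := 1) hw hK₁ hK₂
    fun x => by rw [hsym]
  have absorb_b (x : ℝ) :
      deriv w x * b x * ((∫ ξ in (0:ℝ)..x, P1 x ξ * w ξ) + ∫ ξ in x..(1:ℝ), P2 x ξ * w ξ) =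
        deriv w x * ((∫ ξ in (0:ℝ)..x, b x * P1 x ξ * w ξ) +
          ∫ ξ in x..(1:ℝ), b x * P2 x ξ * w ξ) := by
    simp only [mul_assoc, mul_add, intervalIntegral.integral_const_mul]
  have reflect_P1 (x ξ : ℝ) :
      deriv (fun s => b s * P1 x s) ξ = deriv (fun s => b s * P2 s x) ξ := by simp only [hsym]
  have reflect_P2 (x ξ : ℝ) :
      deriv (fun s => b s * P2 x s) ξ = deriv (fun s => b s * P1 s x) ξ := by simp only [hsym]
  simp only [absorb_b, reflect_P1, reflect_P2]
  rw [kernel_identity, splitIntegral]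
  ring
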